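/- arXiv:2311.06779 — 3 statements merged into one kernel-verified Lean document; each statement's English description precedes it below -/
import Mathlib

section
/- For every even integer k ≥ 2 and all rational numbers P, Q and S, if s_k · P + s_{k/2,k/2} · Q = S and a_k · P + a_{k/2,k/2} · Q = 0, then Q = ( k! / (2^{k−1}(2^k−1)|B_k|) )² · S. -/
/-!
Write `x = 2 ^ k` and `b = |B_k| / k!`. Since `s_k = -2 x² (x²/2 - 1) a_k`, adding
`2 x² (x²/2 - 1)` times the second equation to the first eliminates `P` and also cancels `s_k`
against `a_k` in the coefficient of `Q`, leaving
`(s_{k/2}² + 2 x² (x²/2 - 1) a_{k/2}²) / 2 * Q = S`.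
With `s_{k/2} = x (x/2 - 1) b` and `a_{k/2} = -b/2` this coefficient equals `((x/2) (x - 1) b)²`.
Solving for `Q` requires `B_k ≠ 0`, which follows from Euler's formula expressing `ζ(k) > 0`
as a multiple of `B_k`.
-/

/-- The coefficient of `p_k` in the k-th Hirzebruch L-polynomial:
`s_k = 2^{2k}(2^{2k-1}-1)|B_{2k}|/(2k)!`. -/
noncomputable def sCoef (k : ℕ) : ℚ :=
  2 ^ (2 * k) * (2 ^ (2 * k - 1) - 1) * |bernoulli (2 * k)| / ((2 * k).factorial : ℚ)

/-- The coefficient of `p_k` in the k-th Hirzebruch Â-polynomial: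
`a_k = -|B_{2k}|/(2·(2k)!)`. -/
noncomputable def aCoef (k : ℕ) : ℚ :=
  -|bernoulli (2 * k)| / (2 * ((2 * k).factorial : ℚ))

/-- For even `k`, the coefficient of `p_{k/2}²` in the k-th Hirzebruch L-polynomial:
`s_{k/2,k/2} = (s_{k/2}² − s_k)/2`. -/
noncomputable def sHalfCoef (k : ℕ) : ℚ := (sCoef (k / 2) ^ 2 - sCoef k) / 2

/-- For even `k`, the coefficient of `p_{k/2}²` in the k-th Hirzebruch Â-polynomial:
`a_{k/2,k/2} = (a_{k/2}² − a_k)/2`. -/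
noncomputable def aHalfCoef (k : ℕ) : ℚ := (aCoef (k / 2) ^ 2 - aCoef k) / 2

/-- The even-index Bernoulli numbers do not vanish: `B_{2m}` is a factor of `ζ(2m)`, which is
positive. -/
lemma bernoulli_two_mul_ne_zero {m : ℕ} (hm : m ≠ 0) : bernoulli (2 * m) ≠ 0 := by
  intro h
  have hs := hasSum_zeta_nat hm
  rw [h] at hs
  have h1 := le_hasSum hs 1 (fun n _ => by positivity)
  norm_num at h1

/-- For every even integer `k ≥ 2` and rationals `P`, `Q`, `S`, if
`s_k · P + s_{k/2,k/2} · Q = S` and `a_k · P + a_{k/2,k/2} · Q = 0`,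
then `Q = ( k! / (2^{k−1}(2^k−1)|B_k|) )² · S`. -/
theorem stmt_4 (k : ℕ) (heven : Even k) (hk : 2 ≤ k) (P Q S : ℚ)
    (hsign : sCoef k * P + sHalfCoef k * Q = S)
    (hahat : aCoef k * P + aHalfCoef k * Q = 0) :
    Q = ((k.factorial : ℚ) / (2 ^ (k - 1) * (2 ^ k - 1) * |bernoulli k|)) ^ 2 * S := by
  obtain ⟨m, hm⟩ := heven.two_dvd
  have hm0 : m ≠ 0 := by omega
  have hhalf : k / 2 = m := by omega
  have hB : |bernoulli k| ≠ 0 := by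
    rw [hm]
    exact abs_ne_zero.mpr (bernoulli_two_mul_ne_zero hm0)
  have hfac : (k.factorial : ℚ) ≠ 0 := by exact_mod_cast k.factorial_ne_zero
  have hx1 : (2 : ℚ) ^ k - 1 ≠ 0 := by
    have : (1 : ℚ) < 2 ^ k := one_lt_pow₀ (by norm_num) (by omega)
    linarith
  have hp1 : (2 : ℚ) ^ (k - 1) = 2 ^ k / 2 := by
    rw [eq_div_iff two_ne_zero, ← pow_succ, Nat.sub_add_cancel (by omega)]
  have hp2 : (2 : ℚ) ^ (2 * k - 1) = (2 ^ k) ^ 2 / 2 := by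
    rw [eq_div_iff two_ne_zero, ← pow_succ, Nat.sub_add_cancel (by omega), ← pow_mul, mul_comm]
  have hx0 : (2 : ℚ) ^ k ≠ 0 := by positivity
  have hs : sCoef k = -(2 * (2 ^ k) ^ 2 * ((2 ^ k) ^ 2 / 2 - 1)) * aCoef k := by
    unfold sCoef aCoef
    rw [hp2, mul_comm 2 k, pow_mul]
    field_simp
  have hsm : sCoef m = 2 ^ k * (2 ^ k / 2 - 1) * (|bernoulli k| / k.factorial) := by
    unfold sCoef
    rw [← hm, hp1]
    ring
  have ham : aCoef m = -(|bernoulli k| / k.factorial) / 2 := by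
    unfold aCoef
    rw [← hm]
    ring
  unfold sHalfCoef at hsign
  unfold aHalfCoef at hahat
  rw [hhalf, hs, hsm] at hsign
  rw [hhalf, ham] at hahat
  rw [hp1]
  generalize (2 : ℚ) ^ k = x at *
  have key : S = (x / 2 * (x - 1) * (|bernoulli k| / k.factorial)) ^ 2 * Q := by
    linear_combination -hsign - (2 * x ^ 2 * (x ^ 2 / 2 - 1)) * hahat
  rw [key]
  field_simp
end

section
/- Let k ≥ 2 be an even integer and let p be a prime with p ∣ 2^k − 1 and p > k + 1. If integers P, Q and S satisfy s_k · P + s_{k/2,k/2} · Q = S and a_k · P + a_{k/2,k/2} · Q = 0, then p² divides S. -/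
/-- The `p`-integrality of `B_n` for `n + 1 < p`, the easy part of von Staudt–Clausen. -/
lemma padicNorm_bernoulli'_le_one (p : ℕ) [Fact p.Prime] (n : ℕ) (hn : n + 1 < p) :
    padicNorm p (bernoulli' n) ≤ 1 := by
  induction n using Nat.strong_induction_on with
  | _ n ih =>
    rw [bernoulli'_def]
    refine padicNorm.sub.trans (max_le (by simp) (padicNorm.sum_le' (fun i hi => ?_) zero_le_one))
    have hi' : i < n := Finset.mem_range.mp hi
    have hcast : ((n : ℚ) - i + 1) = ((n - i + 1 : ℕ) : ℚ) := by
      push_cast [Nat.cast_sub hi'.le]; ring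
    have hunit : padicNorm p ((n - i + 1 : ℕ) : ℚ) = 1 :=
      (padicNorm.nat_eq_one_iff _).mpr (Nat.not_dvd_of_pos_of_lt (by omega) (by omega))
    rw [padicNorm.mul, padicNorm.div, hcast, hunit, div_one]
    exact mul_le_one₀ (padicNorm.of_nat _) (padicNorm.nonneg _) (ih i hi' (by omega))

lemma padicNorm_aCoef_le_one (p : ℕ) [hp : Fact p.Prime] (m : ℕ) (hm : 1 ≤ m)
    (hbig : 2 * m + 1 < p) : padicNorm p (aCoef m) ≤ 1 := by
  have hB : padicNorm p |bernoulli (2 * m)| ≤ 1 := by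
    rw [bernoulli_eq_bernoulli'_of_ne_one (by omega)]
    have h := padicNorm_bernoulli'_le_one p (2 * m) hbig
    rcases abs_choice (bernoulli' (2 * m)) with h' | h' <;> rw [h']
    · exact h
    · rwa [padicNorm.neg]
  have hden : padicNorm p ((2 * (2 * m).factorial : ℕ) : ℚ) = 1 := by
    rw [padicNorm.nat_eq_one_iff, hp.out.dvd_mul, hp.out.dvd_factorial]
    rintro (h | h)
    · exact absurd (Nat.le_of_dvd two_pos h) (by omega)
    · omega
  push_cast at hden
  rwa [aCoef, padicNorm.div, padicNorm.neg, hden, div_one]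

lemma sCoef_eq (j : ℕ) :
    sCoef j = -(2 * 2 ^ (2 * j) * (2 ^ (2 * j - 1) - 1)) * aCoef j := by
  have : ((2 * j).factorial : ℚ) ≠ 0 := by exact_mod_cast (2 * j).factorial_ne_zero
  rw [sCoef, aCoef]
  field_simp

/-- The closed formula for the signature obtained by eliminating `P`. -/
lemma signature_eq (m : ℕ) (hm : 1 ≤ m) (P Q S : ℚ)
    (hsign : sCoef (2 * m) * P + sHalfCoef (2 * m) * Q = S)
    (hahat : aCoef (2 * m) * P + aHalfCoef (2 * m) * Q = 0) :
    S = aCoef m ^ 2 * (Q * (2 ^ (2 * m)) ^ 2) * (2 ^ (2 * m) - 1) ^ 2 := by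
  have hhalf : 2 * m / 2 = m := by omega
  rw [sHalfCoef, hhalf, sCoef_eq, sCoef_eq] at hsign
  rw [aHalfCoef, hhalf] at hahat
  -- Everything is expressed through `x = 2^{k-1}`, where `k = 2m`.
  have h1 : (2 : ℚ) ^ (2 * m) = 2 * 2 ^ (2 * m - 1) := by
    rw [← pow_succ']; congr 1; omega
  have h2 : (2 : ℚ) ^ (2 * (2 * m)) = 4 * (2 ^ (2 * m - 1)) ^ 2 := by
    rw [two_mul (2 * m), pow_add, h1]; ring
  have h3 : (2 : ℚ) ^ (2 * (2 * m) - 1) = 2 * (2 ^ (2 * m - 1)) ^ 2 := by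
    have : (2 : ℚ) * 2 ^ (2 * (2 * m) - 1) = 2 ^ (2 * (2 * m)) := by
      rw [← pow_succ']; congr 1; omega
    linarith
  rw [h1, h2, h3] at hsign
  rw [h1]
  generalize (2 : ℚ) ^ (2 * m - 1) = x at *
  linear_combination -hsign - 8 * x ^ 2 * (2 * x ^ 2 - 1) * hahat

/-- Let `k ≥ 2` be even and `p` a prime with `p ∣ 2^k − 1` and `p > k + 1`.
If integers `P`, `Q`, `S` satisfy `s_k · P + s_{k/2,k/2} · Q = S` and
`a_k · P + a_{k/2,k/2} · Q = 0`, then `p²` divides `S`. -/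
theorem stmt_6 (k : ℕ) (heven : Even k) (hk : 2 ≤ k) (p : ℕ) (hp : p.Prime)
    (hdvd : p ∣ 2 ^ k - 1) (hbig : k + 1 < p) (P Q S : ℤ)
    (hsign : sCoef k * (P : ℚ) + sHalfCoef k * (Q : ℚ) = (S : ℚ))
    (hahat : aCoef k * (P : ℚ) + aHalfCoef k * (Q : ℚ) = 0) :
    ((p : ℤ)) ^ 2 ∣ S := by
  have : Fact p.Prime := ⟨hp⟩
  obtain ⟨m, rfl⟩ := even_iff_two_dvd.mp heven
  have hS := signature_eq m (by omega) P Q S hsign hahat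
  have hpow : padicNorm p ((2 : ℚ) ^ (2 * m) - 1) ≤ (p : ℚ)⁻¹ := by
    have hd : ((p ^ 1 : ℕ) : ℤ) ∣ (2 : ℤ) ^ (2 * m) - 1 := by
      have h := Int.natCast_dvd_natCast.mpr hdvd
      rw [Nat.cast_sub Nat.one_le_two_pow] at h
      simpa using h
    simpa using padicNorm.dvd_iff_norm_le.mp hd
  have hQ : padicNorm p ((Q : ℚ) * (2 ^ (2 * m)) ^ 2) ≤ 1 := by
    have h := padicNorm.of_int (p := p) (Q * (2 ^ (2 * m)) ^ 2)
    exact_mod_cast h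
  have ha := padicNorm_aCoef_le_one p m (by omega) hbig
  have hnorm : padicNorm p (S : ℚ) ≤ (p : ℚ) ^ (-(2 : ℕ) : ℤ) := by
    rw [hS, pow_two (aCoef m), pow_two ((2 : ℚ) ^ (2 * m) - 1), padicNorm.mul,
      padicNorm.mul (aCoef m * aCoef m), padicNorm.mul (aCoef m),
      padicNorm.mul ((2 : ℚ) ^ (2 * m) - 1)]
    have h1 := mul_le_one₀ (mul_le_one₀ ha (padicNorm.nonneg _) ha)
      (padicNorm.nonneg _) hQ
    have h2 := mul_le_mul hpow hpow (padicNorm.nonneg _) (by positivity)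
    calc _ ≤ 1 * ((p : ℚ)⁻¹ * (p : ℚ)⁻¹) :=
          mul_le_mul h1 h2 (mul_nonneg (padicNorm.nonneg _) (padicNorm.nonneg _)) zero_le_one
      _ = _ := by rw [zpow_neg, zpow_natCast, one_mul, ← mul_inv, pow_two]
  exact_mod_cast padicNorm.dvd_iff_norm_le.mpr hnorm
end

section
/- For every integer n ≥ 13, there exists a prime p with p ∣ 2^n − 1 and p ≥ 2n + 1; equivalently, the largest prime factor of the Mersenne number 2^n − 1 is at least 2n + 1 for n ≥ 13. -/
/-!
A prime `r` modulo which `2` has order `n` divides `2 ^ n - 1` and is `≡ 1 (mod n)`, so it is at least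
`2n + 1` unless `r = n + 1`. In that case `2` is a primitive root, hence a non-square, modulo `n + 1`,
and so `n + 1 ≡ 3, 5 (mod 8)` by the supplementary law of quadratic reciprocity. Only two residue
classes need more than the existence of one prime of order `n`.

* If `n ≡ 2 (mod 8)`, take a prime `r` of order `m = n / 2`. As `m` is odd, `2` is a square modulo `r`,
  so `r ≡ ±1 (mod 8)`. This excludes `r = 2m + 1 = n + 1 ≡ 3 (mod 8)`, and since `r ≡ 1 (mod 2m)`,
  `r ≥ 4m + 1 = 2n + 1`.
* If `n = 4m` with `m` odd, `Φ_n(2)` splits into two coprime factors, the norms of `Φ_m(±(1 + i))`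
  (`aurifeuille`). Each yields a prime of order `n`, and only one of these can be `n + 1`.

The primes of order `n` come from `exists_order`: a divisor of `Φ_n(2)` that exceeds all prime factors
of `n` has such a prime factor. The required lower bounds on `Φ_n(2)` and on `|Φ_m(±(1 + i))|²` are
of the form `2 ^ φ > 30 · prime`; they follow from Möbius inversion (`log_cyclotomic_bound`), and suffice
as soon as the totient is at least `8`. The finitely many remaining `n` are checked directly.
-/

section

open Polynomial Finset

/-! ### A lower bound for cyclotomic values -/

theorem log_bound (w : ℂ) (hw : ‖w‖ < 1) : |Real.log ‖1 - w‖| ≤ ‖w‖ / (1 - ‖w‖) := by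
  have h1 : 1 - ‖w‖ ≤ ‖1 - w‖ := by simpa using norm_sub_norm_le (1 : ℂ) w
  have h2 : ‖1 - w‖ ≤ 1 + ‖w‖ := by simpa using norm_sub_le (1 : ℂ) w
  have h0 := norm_nonneg w
  have h3 : 0 < 1 - ‖w‖ := by linarith
  have hpos : 0 < ‖1 - w‖ := by linarith
  rw [abs_le]
  constructor
  · have := Real.one_sub_inv_le_log_of_pos h3
    have h5 := Real.log_le_log h3 h1
    have : 1 - (1 - ‖w‖)⁻¹ = -(‖w‖ / (1 - ‖w‖)) := by field_simp; ring
    linarith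
  · have := Real.log_le_sub_one_of_pos hpos
    have : ‖w‖ ≤ ‖w‖ / (1 - ‖w‖) := by
      rw [le_div_iff₀ h3]; nlinarith
    linarith

theorem sum_geom_bound (s : Finset ℕ) (f : ℕ → ℝ) (κ : ℕ → ℕ) (hκ : Set.InjOn κ s)
    (hf : ∀ e ∈ s, f e ≤ (1 / 2) ^ κ e) : ∑ e ∈ s, f e ≤ 2 := by
  refine (sum_le_sum hf).trans ?_
  rw [← sum_image (f := fun k : ℕ => (1 / 2 : ℝ) ^ k) hκ]
  have := summable_geometric_two.sum_le_tsum (s.image κ) (fun i _ => by positivity)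
  rwa [tsum_geometric_two] at this

/-- Möbius inversion of `∑_{d ∣ n} (log |Φ_d(z)| - φ(d) log |z|) = log |1 - z⁻ⁿ|` shows that
`|Φ_N(z)|` is at least `|z| ^ φ(N)` up to a factor that does not depend on `N` once the sum over
`e` is controlled by a geometric series. -/
theorem log_cyclotomic_bound (z : ℂ) (hz : 1 < ‖z‖) (N : ℕ) (hN : 0 < N) :
    N.totient * Real.log ‖z‖ - ∑ e ∈ N.divisors, |Real.log ‖1 - z⁻¹ ^ e‖|
      ≤ Real.log ‖(cyclotomic N ℂ).eval z‖ := by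
  have hz0 : z ≠ 0 := by rintro rfl; norm_num at hz
  have hne : ∀ n : ℕ, 0 < n → z ^ n - 1 ≠ 0 := by
    intro n hn h
    have h1 : ‖z‖ ^ n = 1 := by rw [← norm_pow, sub_eq_zero.1 h, norm_one]
    exact absurd h1 (one_lt_pow₀ hz hn.ne').ne'
  have hprod : ∀ n : ℕ, 0 < n → ∏ d ∈ n.divisors, (cyclotomic d ℂ).eval z = z ^ n - 1 := by
    intro n hn
    rw [← eval_prod, prod_cyclotomic_eq_X_pow_sub_one hn]; simp
  have hsum : ∀ n : ℕ, n > 0 → ∑ d ∈ n.divisors,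
      (Real.log ‖(cyclotomic d ℂ).eval z‖ - d.totient * Real.log ‖z‖)
        = Real.log ‖1 - z⁻¹ ^ n‖ := by
    intro n hn
    have hp := hprod n hn
    have hf : ∀ d ∈ n.divisors, ‖(cyclotomic d ℂ).eval z‖ ≠ 0 := by
      intro d hd h
      rw [norm_eq_zero] at h
      exact hne n hn (by rw [← hp]; exact prod_eq_zero hd h)
    rw [sum_sub_distrib, ← Real.log_prod hf, ← norm_prod, hp, ← sum_mul, ← Nat.cast_sum,
      Nat.sum_totient, ← Real.log_pow, ← Real.log_div (by simpa using hne n hn)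
      (by simpa using fun h => absurd h hz0), ← norm_pow, ← norm_div, sub_div,
      div_self (pow_ne_zero _ hz0), inv_pow, one_div]
  have hm := (ArithmeticFunction.sum_eq_iff_sum_mul_moebius_eq).1 hsum N hN
  have hb : |∑ x ∈ N.divisorsAntidiagonal,
      ((ArithmeticFunction.moebius x.1 : ℤ) : ℝ) * Real.log ‖1 - z⁻¹ ^ x.2‖|
      ≤ ∑ e ∈ N.divisors, |Real.log ‖1 - z⁻¹ ^ e‖| := by
    rw [← Nat.sum_divisorsAntidiagonal' (f := fun _ e => |Real.log ‖1 - z⁻¹ ^ e‖|)]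
    refine (abs_sum_le_sum_abs _ _).trans (sum_le_sum fun x _ => ?_)
    rw [abs_mul]
    refine mul_le_of_le_one_left (abs_nonneg _) ?_
    exact_mod_cast ArithmeticFunction.abs_moebius_le_one
  rw [hm] at hb
  have := (abs_le.1 hb).1
  linarith

/-! ### Totients -/

/-- The hypothesis is optimal: `φ(18) = 6`. If `φ(N) ≤ 7`, then every prime power dividing `N` has
totient at most `7`, so that `N ∣ 2520`. -/
theorem totient_ge (N : ℕ) (hN : 18 < N) : 8 ≤ N.totient := by
  by_contra! hlt
  have hd : N ∣ 2520 := by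
    rw [← Nat.factorization_prime_le_iff_dvd (by omega) (by norm_num)]
    intro p hp
    by_contra! hk
    set k := N.factorization p with hkdef
    set j := Nat.factorization 2520 p with hj
    have hjk : p ^ (j + 1) ∣ N := (pow_dvd_pow p hk).trans (Nat.ordProj_dvd N p)
    have h1 := Nat.le_of_dvd (Nat.totient_pos.2 (by omega)) (Nat.totient_dvd_of_dvd hjk)
    rw [Nat.totient_prime_pow_succ hp] at h1
    have h2 : ¬ p ^ (j + 1) ∣ 2520 := Nat.pow_succ_factorization_not_dvd (by norm_num) hp
    have hp7 : p - 1 ≤ 7 := by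
      have : 1 ≤ p ^ j := Nat.one_le_pow _ _ hp.pos
      nlinarith
    have hj3 : 2 ^ j ≤ 7 := by
      have := Nat.pow_le_pow_left hp.two_le j
      have := hp.two_le
      have : 1 ≤ p - 1 := by omega
      nlinarith
    have hj' : j < 3 := by
      by_contra! h
      have := Nat.pow_le_pow_right (n := 2) (by norm_num) h
      omega
    have key : ∀ p < 9, ∀ j < 3, p.Prime → p ^ j * (p - 1) ≤ 7 → p ^ (j + 1) ∣ 2520 := by
      decide +kernel
    exact h2 (key p (by omega) j hj' hp (by omega))
  have := Nat.le_of_dvd (by norm_num) hd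
  have key : ∀ N ∈ Nat.divisors 2520, 18 < N → 8 ≤ N.totient := by decide +kernel
  exact absurd (key N (by simpa using hd) hN) (by omega)

/-- Any prime `q ∣ N` has `q - 1 ≤ φ(N)`, so `2 ^ φ(N)` dominates `30 q` as soon as `φ(N) ≥ 8`. The
factor `30` is the loss in the lower bounds for cyclotomic values below. -/
theorem totient_prime (N q : ℕ) (hN : 8 ≤ N.totient) (hq : q.Prime) (h : q ∣ N) :
    30 * q < 2 ^ N.totient := by
  have h0 : 0 < N.totient := by omega
  have h1 := Nat.le_of_dvd h0 (Nat.totient_dvd_of_dvd h)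
  rw [Nat.totient_prime hq] at h1
  by_cases hq8 : q ≤ 8
  · have := Nat.pow_le_pow_right (n := 2) (by norm_num) hN
    omega
  · have key : ∀ k, 8 ≤ k → 30 * (k + 1) < 2 ^ k * 2 := by
      intro k hk
      induction k, hk using Nat.le_induction with
      | base => norm_num
      | succ k hk ih => rw [pow_succ]; omega
    by_cases hq9 : q = 9
    · subst hq9; revert hq; norm_num
    have := key (q - 2) (by omega)
    have e : 2 ^ (q - 2) * 2 = 2 ^ (q - 1) := by rw [← pow_succ]; congr 1; omega
    have h2 := Nat.pow_le_pow_right (n := 2) (by norm_num) h1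
    by_cases hq10 : q = 10
    · subst hq10; revert hq; norm_num
    have := key (q - 3) (by omega)
    have e : 2 ^ (q - 3) * 2 = 2 ^ (q - 2) := by rw [← pow_succ]; congr 1; omega
    omega

/-! ### Cyclotomic polynomials at `-x` -/

theorem cyclotomic_neg_eval {m : ℕ} (hm : Odd m) (h2 : 2 < m) {R : Type*} [CommRing R] (x : R) :
    (cyclotomic m R).eval (-x) = (cyclotomic (2 * m) R).eval x := by
  have hpoly : (cyclotomic m ℤ).comp (-X) = cyclotomic (2 * m) ℤ := by
    have hprim := Complex.isPrimitiveRoot_exp m (by omega)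
    -- `-ζ` is a primitive `2m`-th root of unity and a root of `Φ_m(-X)`.
    set ζ := Complex.exp (2 * Real.pi * Complex.I / m)
    have hprim2 : IsPrimitiveRoot (-ζ) (2 * m) := by
      have h1 : IsPrimitiveRoot (-1 : ℂ) 2 := IsPrimitiveRoot.neg_one 0 (by norm_num)
      rw [IsPrimitiveRoot.iff_orderOf, neg_eq_neg_one_mul,
        (Commute.all _ _).orderOf_mul_eq_mul_orderOf_of_coprime] <;>
        rw [← h1.eq_orderOf, ← hprim.eq_orderOf]
      exact (Nat.coprime_two_left).2 hm
    have hdeg : ((cyclotomic m ℤ).comp (-X)).natDegree = (cyclotomic (2 * m) ℤ).natDegree := by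
      rw [natDegree_comp, natDegree_neg, natDegree_X, mul_one, natDegree_cyclotomic,
        natDegree_cyclotomic, Nat.totient_mul ((Nat.coprime_two_left).2 hm)]
      simp
    have hmonic : ((cyclotomic m ℤ).comp (-X)).Monic := by
      rw [Monic, leadingCoeff_comp (by simp), (cyclotomic.monic m ℤ).leadingCoeff,
        natDegree_cyclotomic, leadingCoeff_neg, leadingCoeff_X, (Nat.totient_even h2).neg_one_pow,
        one_mul]
    have hdvd : cyclotomic (2 * m) ℤ ∣ (cyclotomic m ℤ).comp (-X) := by
      rw [cyclotomic_eq_minpoly hprim2 (by omega)]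
      refine minpoly.isIntegrallyClosed_dvd (hprim2.isIntegral (by omega)) ?_
      rw [aeval_comp]
      simp only [map_neg, aeval_X, neg_neg]
      rw [aeval_def, eval₂_eq_eval_map, map_cyclotomic]
      exact hprim.isRoot_cyclotomic (by omega)
    exact (eq_of_monic_of_dvd_of_natDegree_le (cyclotomic.monic _ _) hmonic hdvd hdeg.le)
  have := congrArg (fun p => (p.map (Int.castRingHom R)).eval x) hpoly
  simpa [Polynomial.map_comp, eval_comp] using this

/-! ### Prime factors of `Φ_n(2)` -/

/-- A prime divisor `q` of `Φ_n(2)` has `ord_q(2)` equal to the `q`-free part of `n`. -/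
theorem orders {n q : ℕ} (hq : q.Prime) (hn : 0 < n)
    (hqD : (q : ℤ) ∣ (cyclotomic n ℤ).eval 2) :
    ∃ k n', n = q ^ k * n' ∧ ¬ q ∣ n' ∧ orderOf (2 : ZMod q) = n' := by
  have := Fact.mk hq
  obtain ⟨k, n', hnd, rfl⟩ := Nat.exists_eq_pow_mul_and_not_dvd hn.ne' q hq.ne_one
  refine ⟨k, n', rfl, hnd, ?_⟩
  have : NeZero ((n' : ℕ) : ZMod q) := ⟨by rwa [Ne, ZMod.natCast_eq_zero_iff]⟩
  have hroot : (cyclotomic (q ^ k * n') (ZMod q)).IsRoot 2 := by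
    have := (ZMod.intCast_zmod_eq_zero_iff_dvd _ q).2 hqD
    rw [IsRoot, ← map_cyclotomic_int]
    rw [show (2 : ZMod q) = Int.castRingHom (ZMod q) 2 by simp, eval_map_apply]
    simpa using this
  rcases Nat.eq_zero_or_pos k with rfl | hk
  · rw [pow_zero, one_mul, isRoot_cyclotomic_iff] at hroot
    exact hroot.eq_orderOf.symm
  · have : NeZero k := ⟨hk.ne'⟩
    rw [isRoot_cyclotomic_prime_pow_mul_iff_of_charP] at hroot
    exact hroot.eq_orderOf.symm

theorem cyclotomic_two_dvd (n : ℕ) : (cyclotomic n ℤ).eval 2 ∣ 2 ^ n - 1 := by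
  have := map_dvd (evalRingHom (2 : ℤ)) (cyclotomic.dvd_X_pow_sub_one n ℤ)
  simpa using this

/-- A prime factor of `Φ_n(2)` that also divides `n` divides it only once: with `n = q s`, the integer
`(2 ^ s - 1) Φ_n(2)` divides `2 ^ n - 1`, whose `q`-adic valuation exceeds that of `2 ^ s - 1` by
that of `q`, by lifting the exponent. -/
theorem sq_not_dvd {n q : ℕ} (hq : q.Prime) (hqn : q ∣ n) (hn : 0 < n)
    (hqD : (q : ℤ) ∣ (cyclotomic n ℤ).eval 2) : ¬ (q : ℤ) ^ 2 ∣ (cyclotomic n ℤ).eval 2 := by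
  intro hsq
  have := Fact.mk hq
  have hodd : q ≠ 2 := by
    rintro rfl
    have h := hqD.trans (cyclotomic_two_dvd n)
    have h2 : (2 : ℤ) ∣ 2 ^ n := dvd_pow_self 2 hn.ne'
    have h3 := (dvd_sub_right h2).1 h
    norm_num at h3
  obtain ⟨k, n', hnk, hnd, hord⟩ := orders hq hn hqD
  obtain ⟨s, rfl⟩ := hqn
  have hs : 0 < s := Nat.pos_of_mul_pos_left hn
  have hn's : n' ∣ s := by
    have h1 : n' ∣ q * s := ⟨q ^ k, by rw [hnk, mul_comm]⟩
    exact (Nat.Coprime.symm ((Nat.Prime.coprime_iff_not_dvd hq).2 hnd)).dvd_of_dvd_mul_left h1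
  have hqs : q ∣ 2 ^ s - 1 := by
    rw [← ZMod.natCast_eq_zero_iff, Nat.cast_sub Nat.one_le_two_pow]
    push_cast
    rw [orderOf_dvd_iff_pow_eq_one.1 (hord ▸ hn's), sub_self]
  have hlte := padicValNat.pow_sub_pow (p := q) (x := 2 ^ s) (y := 1) (hq.odd_of_ne_two hodd)
    (Nat.one_lt_two_pow hs.ne') hqs
    (fun h => hodd ((Nat.prime_dvd_prime_iff_eq hq Nat.prime_two).1 (hq.dvd_of_dvd_pow h)))
    hq.ne_zero
  rw [padicValNat_self, one_pow, ← pow_mul, mul_comm s q] at hlte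
  have hdvd : ((2 : ℤ) ^ s - 1) * (cyclotomic (q * s) ℤ).eval 2 ∣ 2 ^ (q * s) - 1 := by
    have := map_dvd (evalRingHom (2 : ℤ))
      (X_pow_sub_one_mul_cyclotomic_dvd_X_pow_sub_one_of_dvd ℤ (d := s) (n := q * s) (by
        rw [Nat.mem_properDivisors]
        exact ⟨dvd_mul_left _ _, by nlinarith [hq.two_le]⟩))
    simpa using this
  have hdvd2 : (2 ^ s - 1) * q ^ 2 ∣ 2 ^ (q * s) - 1 := by
    have h := (mul_dvd_mul_left ((2 : ℤ) ^ s - 1) hsq).trans hdvd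
    zify [Nat.one_le_two_pow]
    exact h
  have h1 : 2 ^ s - 1 ≠ 0 := by have := Nat.one_lt_two_pow hs.ne'; omega
  have h2 : 2 ^ (q * s) - 1 ≠ 0 := by have := Nat.one_lt_two_pow hn.ne'; omega
  have h3 := (padicValNat_dvd_iff_le h2 (p := q)
    (n := padicValNat q (2 ^ s - 1) + 2)).1 (by
      rw [pow_add]
      exact (mul_dvd_mul_right pow_padicValNat_dvd _).trans hdvd2)
  omega

/-- A divisor `D` of `Φ_n(2)` larger than every prime factor of `n` has a prime factor modulo which
`2` has order `n`. Otherwise all primes dividing `D` divide `n`; each is then the largest prime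
factor of `n`, and it divides `D` only once, so `D` would be equal to it. -/
theorem exists_order {n D : ℕ} (hn : 0 < n) (hD : (D : ℤ) ∣ (cyclotomic n ℤ).eval 2)
    (h1 : 1 < D) (hbig : ∀ q : ℕ, q.Prime → q ∣ n → q < D) :
    ∃ r : ℕ, r.Prime ∧ r ∣ D ∧ orderOf (2 : ZMod r) = n := by
  by_contra! hno
  have hcase : ∀ r : ℕ, r.Prime → r ∣ D → r ∣ n ∧ ∀ s : ℕ, s.Prime → s ∣ n → s ≤ r := by
    intro r hr hrD
    have := Fact.mk hr
    obtain ⟨k, n', hnk, hnd, hord⟩ := orders hr hn ((Int.natCast_dvd_natCast.2 hrD).trans hD)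
    have hk : k ≠ 0 := by
      rintro rfl
      exact hno r hr hrD (by rw [hord, hnk]; simp)
    refine ⟨hnk ▸ (dvd_pow_self r hk).mul_right _, fun s hs hsn => ?_⟩
    rw [hnk, hs.dvd_mul] at hsn
    rcases hsn with h | h
    · exact ((Nat.prime_dvd_prime_iff_eq hs hr).1 (hs.dvd_of_dvd_pow h)).le
    · have h2 : (2 : ZMod r) ≠ 0 := by
        intro h0
        rw [h0, orderOf_zero] at hord
        rw [← hord] at hnk
        omega
      have := ZMod.orderOf_dvd_card_sub_one h2
      rw [hord] at this
      have := Nat.le_of_dvd (by have := hr.two_le; omega) (h.trans this)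
      omega
  obtain ⟨q, hq, hqD⟩ := Nat.exists_prime_and_dvd h1.ne'
  have hpow := Nat.eq_prime_pow_of_unique_prime_dvd (p := q) (by omega : D ≠ 0)
    (fun {d} hd hdD => le_antisymm ((hcase q hq hqD).2 d hd (hcase d hd hdD).1)
      ((hcase d hd hdD).2 q hq (hcase q hq hqD).1))
  have hlen : 2 ≤ D.primeFactorsList.length := by
    by_contra! hl
    have h2 := Nat.pow_le_pow_right hq.pos (by omega : D.primeFactorsList.length ≤ 1)
    have := hbig q hq (hcase q hq hqD).1
    have h3 : D ≤ q := hpow.le.trans (h2.trans (pow_one q).le)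
    omega
  have hsq : q ^ 2 ∣ D := by rw [hpow]; exact pow_dvd_pow q hlen
  refine sq_not_dvd hq (hcase q hq hqD).1 hn ((Int.natCast_dvd_natCast.2 hqD).trans hD) ?_
  have := (Int.natCast_dvd_natCast.2 hsq).trans hD
  exact_mod_cast this

/-! ### Explicit bounds at `2` and `±(1 ± i)` -/

theorem exp_bound : Real.exp (16 / 5) < 30 := by
  have h1 := Real.exp_one_lt_d9
  have h2 : Real.exp (16 / 5) ^ 5 = Real.exp 1 ^ 16 := by
    rw [← Real.exp_nat_mul, ← Real.exp_nat_mul]; norm_num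
  have h3 : Real.exp 1 ^ 16 < 30 ^ 5 :=
    (pow_lt_pow_left₀ h1 (Real.exp_pos _).le (by norm_num)).trans (by norm_num)
  exact lt_of_pow_lt_pow_left₀ 5 (by norm_num) (h2 ▸ h3)

theorem two_pow_totient_lt {N : ℕ} (hN : 0 < N) :
    (2 : ℝ) ^ N.totient < 30 * (cyclotomic N ℝ).eval 2 := by
  have hb := log_cyclotomic_bound 2 (by norm_num) N hN
  have hs : ∑ e ∈ N.divisors, |Real.log ‖1 - (2 : ℂ)⁻¹ ^ e‖| ≤ 2 := by
    refine sum_geom_bound N.divisors _ (fun e => e - 1) ?_ ?_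
    · intro a ha b hb hab
      have := Nat.pos_of_mem_divisors ha
      have := Nat.pos_of_mem_divisors hb
      simp only at hab
      omega
    · intro e he
      obtain ⟨k, rfl⟩ := Nat.exists_eq_succ_of_ne_zero (Nat.pos_of_mem_divisors he).ne'
      have hn : ‖(2 : ℂ)⁻¹ ^ (k + 1)‖ = (1 / 2) ^ k / 2 := by
        rw [norm_pow, norm_inv, Complex.norm_ofNat, pow_succ]; ring
      have hk : (1 / 2 : ℝ) ^ k ≤ 1 := pow_le_one₀ (by norm_num) (by norm_num)
      have hk0 : (0 : ℝ) < (1 / 2) ^ k := by positivity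
      refine (log_bound _ (by rw [hn]; linarith)).trans ?_
      rw [hn, div_le_iff₀ (by linarith)]
      simp only [Nat.succ_eq_add_one, Nat.add_sub_cancel]
      nlinarith
  have hpos : 0 < (cyclotomic N ℝ).eval 2 := cyclotomic_pos' N (by norm_num)
  have he : ‖(cyclotomic N ℂ).eval 2‖ = (cyclotomic N ℝ).eval 2 := by
    have := cyclotomic.eval_apply (2 : ℝ) N (algebraMap ℝ ℂ)
    simp only [map_ofNat] at this
    rw [this]
    simp [abs_of_pos hpos]
  rw [he] at hb
  have : Real.log (2 ^ N.totient) < Real.log (30 * (cyclotomic N ℝ).eval 2) := by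
    have h30 : 16 / 5 < Real.log 30 := (Real.lt_log_iff_exp_lt (by norm_num)).2 exp_bound
    rw [Real.log_mul (by norm_num) hpos.ne', Real.log_pow]
    simp only [Complex.norm_ofNat] at hb
    linarith
  exact (Real.log_lt_log_iff (by positivity) (by positivity)).1 this

/-- The points `±(1 ± i)` of norm `√2`. The oddness of `N` makes the error terms sum over odd `e` only,
which keeps the constant below `exp (16 / 5)`. -/
theorem two_pow_totient_lt_normSq {N : ℕ} (hN : Odd N) (z : ℂ) (hz : Complex.normSq z = 2)
    (hre : z.re = 1 ∨ z.re = -1) :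
    (2 : ℝ) ^ N.totient < 30 * Complex.normSq ((cyclotomic N ℂ).eval z) := by
  have hsq : ‖z‖ ^ 2 = 2 := by rw [← Complex.normSq_eq_norm_sq, hz]
  have hz1 : 1 < ‖z‖ := by nlinarith [norm_nonneg z]
  have hz7 : 7 / 5 < ‖z‖ := by nlinarith [norm_nonneg z]
  have hz0 : z ≠ 0 := by rintro rfl; norm_num at hz1
  have hb := log_cyclotomic_bound z hz1 N hN.pos
  have h1 : |Real.log ‖1 - z⁻¹ ^ 1‖| ≤ 1 / 2 := by
    have hn : ‖1 - z⁻¹ ^ 1‖ ^ 2 = Complex.normSq (z - 1) / 2 := by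
      rw [← Complex.normSq_eq_norm_sq, pow_one, ← hz, ← map_div₀, sub_div, div_self hz0, one_div]
    have hv : Complex.normSq (z - 1) = 3 - 2 * z.re := by
      rw [Complex.normSq_apply] at hz ⊢
      simp only [Complex.sub_re, Complex.sub_im, Complex.one_re, Complex.one_im]
      linarith
    have hl : 2 * Real.log ‖1 - z⁻¹ ^ 1‖ = Real.log ((3 - 2 * z.re) / 2) := by
      rw [← hv, ← hn, Real.log_pow]; norm_num
    have he := Real.exp_one_gt_d9
    have h52 : Real.log (5 / 2) ≤ 1 := by
      rw [Real.log_le_iff_le_exp (by norm_num)]; linarith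
    have h52' : 0 ≤ Real.log (5 / 2) := Real.log_nonneg (by norm_num)
    have h12 : Real.log (1 / 2) = - Real.log 2 := by rw [one_div, Real.log_inv]
    have h2 : Real.log 2 ≤ 1 := by
      rw [Real.log_le_iff_le_exp (by norm_num)]; linarith
    have h2' : 0 ≤ Real.log 2 := Real.log_nonneg (by norm_num)
    rw [pow_one] at hl ⊢
    rw [abs_le]
    rcases hre with h | h <;> rw [h] at hl <;> norm_num at hl h12 <;> constructor <;> linarith
  have hs : ∑ e ∈ N.divisors, |Real.log ‖1 - z⁻¹ ^ e‖| ≤ 8 / 5 := by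
    rw [← add_sum_erase _ _ (Nat.one_mem_divisors.2 hN.pos.ne')]
    have hodd : ∀ e ∈ N.divisors.erase 1, ∃ k, e = 2 * k + 3 := by
      intro e he
      rw [mem_erase, Nat.mem_divisors] at he
      obtain ⟨k, hk⟩ := hN.of_dvd_nat he.2.1
      exact ⟨k - 1, by omega⟩
    have h := sum_geom_bound (N.divisors.erase 1)
      (fun e => |Real.log ‖1 - z⁻¹ ^ e‖| / (11 / 20)) (fun e => (e - 3) / 2) ?_ ?_
    · rw [← sum_div, div_le_iff₀ (by norm_num)] at h
      linarith
    · intro a ha b hb hab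
      obtain ⟨k, rfl⟩ := hodd a ha
      obtain ⟨l, rfl⟩ := hodd b hb
      simp only at hab
      omega
    · intro e he
      obtain ⟨k, rfl⟩ := hodd e he
      have hi : ‖z‖⁻¹ ^ 2 = 1 / 2 := by rw [inv_pow, hsq]; norm_num
      have hi2 : ‖z‖⁻¹ < 5 / 7 := by
        rw [inv_lt_comm₀ (by linarith) (by norm_num)]; linarith
      have hn : ‖z⁻¹ ^ (2 * k + 3)‖ = (1 / 2) ^ k * (‖z‖⁻¹ / 2) := by
        rw [norm_pow, norm_inv, pow_add, pow_mul, hi, pow_succ, hi]; ring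
      have hk : (1 / 2 : ℝ) ^ k ≤ 1 := pow_le_one₀ (by norm_num) (by norm_num)
      have hk0 : (0 : ℝ) < (1 / 2) ^ k := by positivity
      have hlt : ‖z⁻¹ ^ (2 * k + 3)‖ ≤ (1 / 2) ^ k * (5 / 14) := by
        rw [hn]; exact mul_le_mul_of_nonneg_left (by linarith) hk0.le
      rw [div_le_iff₀ (by norm_num), show (2 * k + 3 - 3) / 2 = k by omega]
      refine (log_bound _ (by linarith)).trans ?_
      rw [div_le_iff₀ (by linarith)]
      nlinarith
  have hne : (cyclotomic N ℂ).eval z ≠ 0 := by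
    intro h0
    have h := eval_dvd (x := z) (cyclotomic.dvd_X_pow_sub_one N ℂ)
    rw [h0, zero_dvd_iff] at h
    simp only [eval_sub, eval_pow, eval_X, eval_one] at h
    have h1 : ‖z‖ ^ N = 1 := by rw [← norm_pow, sub_eq_zero.1 h, norm_one]
    exact absurd h1 (one_lt_pow₀ hz1 hN.pos.ne').ne'
  have hpos : 0 < ‖(cyclotomic N ℂ).eval z‖ := norm_pos_iff.2 hne
  rw [Complex.normSq_eq_norm_sq]
  have : Real.log (2 ^ N.totient) < Real.log (30 * ‖(cyclotomic N ℂ).eval z‖ ^ 2) := by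
    have h30 : 16 / 5 < Real.log 30 := (Real.lt_log_iff_exp_lt (by norm_num)).2 exp_bound
    rw [Real.log_mul (by norm_num) (by positivity), Real.log_pow, Real.log_pow, ← hsq,
      Real.log_pow]
    push_cast
    linarith
  exact (Real.log_lt_log_iff (by positivity) (by positivity)).1 this

/-- The base-`2` case of Zsigmondy's theorem, under a convenient lower bound on the totient. -/
theorem exists_order_of_totient {n : ℕ} (h8 : 8 ≤ n.totient) :
    ∃ r : ℕ, r.Prime ∧ orderOf (2 : ZMod r) = n := by
  have hn : 0 < n := Nat.totient_pos.1 (by omega)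
  have hb := two_pow_totient_lt hn
  have hcast : (cyclotomic n ℝ).eval 2 = (((cyclotomic n ℤ).eval 2 : ℤ) : ℝ) := by
    have := cyclotomic.eval_apply (2 : ℤ) n (Int.castRingHom ℝ)
    simpa using this
  rw [hcast] at hb
  have hb : (2 : ℤ) ^ n.totient < 30 * (cyclotomic n ℤ).eval 2 := by exact_mod_cast hb
  have h256 := Nat.pow_le_pow_right (n := 2) (by norm_num) h8
  zify at h256
  have hnn : 0 ≤ (cyclotomic n ℤ).eval 2 := by linarith
  lift (cyclotomic n ℤ).eval 2 to ℕ using hnn with D hD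
  obtain ⟨r, hr, -, ho⟩ := exists_order hn (D := D) (by rw [hD]) (by omega) (fun q hq hqn => by
    have := totient_prime n q h8 hq hqn
    zify at this
    omega)
  exact ⟨r, hr, ho⟩

/-! ### The Aurifeuillian factorization -/

/-- With `w = x + iy = (1 + i) ^ m` and `m` odd, `w ^ 4 = -4 ^ m` forces `x ^ 2 = y ^ 2`. The two norms
are the Aurifeuillian factors `2 ^ m ∓ 2x + 1` of `4 ^ m + 1`. -/
theorem coprime_norms {m : ℕ} (hm : Odd m) (w : GaussianInt) (hw : w = (⟨1, 1⟩ : GaussianInt) ^ m) :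
    IsCoprime (w - 1).norm (w + 1).norm := by
  obtain ⟨x, y⟩ := w
  have hnorm : x * x + y * y = 2 ^ m := by
    have := congrArg Zsqrtd.norm hw
    have h2 := map_pow (Zsqrtd.normMonoidHom (d := -1)) ⟨1, 1⟩ m
    change Zsqrtd.norm _ = Zsqrtd.norm _ ^ m at h2
    rw [h2] at this
    simpa [Zsqrtd.norm_def] using this
  have h4 : ((⟨x, y⟩ : GaussianInt)) ^ 4 = ((-(4 ^ m) : ℤ) : GaussianInt) := by
    rw [hw, ← pow_mul, mul_comm m 4, pow_mul,
      show (⟨1, 1⟩ : GaussianInt) ^ 4 = ((-4 : ℤ) : GaussianInt) by decide, ← Int.cast_pow,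
      hm.neg_pow]
  have hre := congrArg Zsqrtd.re h4
  rw [Zsqrtd.re_intCast] at hre
  simp only [pow_succ, pow_zero, one_mul, Zsqrtd.re_mul, Zsqrtd.im_mul] at hre
  have hq : (4 : ℤ) ^ m = (2 ^ m) ^ 2 := by rw [← pow_mul, mul_comm, pow_mul]; norm_num
  have hxy2 : 2 * (x * x - y * y) ^ 2 = 0 := by
    linear_combination hre + (x * x + y * y + 2 ^ m) * hnorm - hq
  have hxy : x * x - y * y = 0 := by simpa using hxy2
  -- As `y ^ 2 = x ^ 2`, the norms are `2x² ∓ 2x + 1`, coprime polynomials over `ℤ`.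
  refine ⟨1 - (x ^ 2 - x) * (1 + x), -(x ^ 2 - x) * (1 - x), ?_⟩
  simp only [Zsqrtd.norm_def, Zsqrtd.re_sub, Zsqrtd.im_sub, Zsqrtd.re_add, Zsqrtd.im_add,
    Zsqrtd.re_one, Zsqrtd.im_one]
  have hy : y ^ 2 = x ^ 2 := by linear_combination -hxy
  ring_nf
  simp only [hy]
  ring_nf

/-- The Aurifeuillian factorization of `Φ_{4m}(2) = Φ_m(-4)`: since `-4 = (1 + i) ^ 4`, it is the
product of the norms of the Gaussian integers `Φ_m(1 + i)` and `Φ_m(-(1 + i))`. -/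
theorem aurifeuille {m : ℕ} (hm : Odd m) (h8 : 8 ≤ m.totient) :
    ∃ A B : ℕ, (A : ℤ) * B = (cyclotomic (4 * m) ℤ).eval 2 ∧ A.Coprime B ∧
      2 ^ m.totient < 30 * A ∧ 2 ^ m.totient < 30 * B := by
  have hm2 : 2 < m := by
    by_contra! h
    have := Nat.totient_le m
    omega
  have h2m : ¬ 2 ∣ m := hm.not_two_dvd_nat
  have hbound : ∀ z : GaussianInt, z.norm = 2 → (z.re = 1 ∨ z.re = -1) →
      2 ^ m.totient < 30 * ((cyclotomic m GaussianInt).eval z).norm := by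
    intro z hz hre
    have h := two_pow_totient_lt_normSq hm (z : ℂ)
      (by rw [← GaussianInt.intCast_real_norm, hz]; norm_num)
      (by rw [← GaussianInt.intCast_re]; exact_mod_cast hre)
    rw [cyclotomic.eval_apply, ← GaussianInt.intCast_real_norm] at h
    exact_mod_cast h
  set α : GaussianInt := ⟨1, 1⟩ with hα
  set a := (cyclotomic m GaussianInt).eval α with ha
  set b := (cyclotomic m GaussianInt).eval (-α) with hb
  have hexp : ∀ x : GaussianInt, (cyclotomic m GaussianInt).eval (x ^ 2) =
      (cyclotomic m GaussianInt).eval (-x) * (cyclotomic m GaussianInt).eval x := by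
    intro x
    rw [← expand_eval, cyclotomic_expand_eq_cyclotomic_mul Nat.prime_two h2m, eval_mul,
      cyclotomic_neg_eval hm hm2, mul_comm m 2]
  have hprod : a.norm * b.norm = (cyclotomic (4 * m) ℤ).eval 2 := by
    have h1 : (cyclotomic (4 * m) ℤ).eval 2 = (cyclotomic m ℤ).eval (-4) := by
      rw [cyclotomic_neg_eval hm hm2, show 4 * m = (2 * m) * 2 by ring,
        ← cyclotomic_expand_eq_cyclotomic Nat.prime_two (dvd_mul_right 2 m), expand_eval]
      norm_num
    set c := (cyclotomic m GaussianInt).eval (α ^ 2) with hc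
    have h2 : (((cyclotomic m ℤ).eval (-4) : ℤ) : GaussianInt) = c * star c := by
      have e1 := cyclotomic.eval_apply (-4 : ℤ) m (Int.castRingHom GaussianInt)
      have e2 := cyclotomic.eval_apply (α ^ 2) m (starRingEnd GaussianInt)
      have e3 : Int.castRingHom GaussianInt (-4) = (α ^ 2) ^ 2 := by rw [hα]; decide
      have e4 : starRingEnd GaussianInt (α ^ 2) = -α ^ 2 := by
        rw [starRingEnd_apply, hα]; decide
      rw [e3, hexp] at e1
      rw [e4] at e2
      rw [e2] at e1
      rw [mul_comm]
      exact e1.symm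
    rw [h1, ← Zsqrtd.norm_mul, mul_comm, ← hexp, ← hc]
    rw [← Zsqrtd.norm_eq_mul_conj] at h2
    exact_mod_cast h2.symm
  have hdvd : ∀ z : GaussianInt, ((cyclotomic m GaussianInt).eval z).norm ∣ (z ^ m - 1).norm := by
    intro z
    have h := eval_dvd (x := z) (cyclotomic.dvd_X_pow_sub_one m GaussianInt)
    simp only [eval_sub, eval_pow, eval_X, eval_one] at h
    exact map_dvd Zsqrtd.normMonoidHom h
  have hcop : IsCoprime a.norm b.norm := by
    refine ((coprime_norms hm _ rfl).of_isCoprime_of_dvd_left (hdvd α)).of_isCoprime_of_dvd_right ?_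
    refine (hdvd (-α)).trans ?_
    rw [hm.neg_pow, ← neg_add', Zsqrtd.norm_neg]
  have hA := hbound α (by decide) (by decide)
  have hB := hbound (-α) (by decide) (by decide)
  refine ⟨a.norm.natAbs, b.norm.natAbs, ?_, Int.isCoprime_iff_gcd_eq_one.1 hcop, ?_, ?_⟩
  · rw [GaussianInt.abs_natCast_norm, GaussianInt.abs_natCast_norm, hprod]
  · zify; rw [abs_of_nonneg (GaussianInt.norm_nonneg _)]; exact hA
  · zify; rw [abs_of_nonneg (GaussianInt.norm_nonneg _)]; exact hB

/-! ### Primes with a given order of `2` -/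

theorem order_facts {n r : ℕ} (hn : 1 < n) (hr : r.Prime) (ho : orderOf (2 : ZMod r) = n) :
    r % 2 = 1 ∧ r ∣ 2 ^ n - 1 ∧ ∃ k, 0 < k ∧ r = n * k + 1 := by
  have := Fact.mk hr
  have h2 : (2 : ZMod r) ≠ 0 := by
    intro h0
    rw [h0, orderOf_zero] at ho
    omega
  obtain ⟨k, hk⟩ := ho ▸ ZMod.orderOf_dvd_card_sub_one h2
  have hr2 := hr.two_le
  have hk0 : k ≠ 0 := by rintro rfl; omega
  refine ⟨?_, ?_, k, Nat.pos_of_ne_zero hk0, by omega⟩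
  · rcases hr.eq_two_or_odd with rfl | h
    · exact absurd (by exact_mod_cast ZMod.natCast_self 2) h2
    · exact h
  · rw [← ZMod.natCast_eq_zero_iff, Nat.cast_sub Nat.one_le_two_pow]
    push_cast
    rw [← ho, pow_orderOf_eq_one, sub_self]

/-- If `r = n + 1`, then `2` is a primitive root modulo `r`, hence not a square. -/
theorem not_square_of_order {n r : ℕ} (hn : 1 < n) (hr : r.Prime)
    (ho : orderOf (2 : ZMod r) = n) (hrn : r = n + 1) : ¬ (r % 8 = 1 ∨ r % 8 = 7) := by
  have := Fact.mk hr
  obtain ⟨hodd, -, -⟩ := order_facts hn hr ho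
  intro h
  rw [← ZMod.exists_sq_eq_two_iff (by rintro rfl; omega)] at h
  obtain ⟨y, hy⟩ := h
  have hy0 : y ≠ 0 := by
    rintro rfl
    rw [hy, mul_zero, orderOf_zero] at ho
    omega
  have hpow : (2 : ZMod r) ^ (n / 2) = 1 := by
    rw [hy, ← pow_two, ← pow_mul, show 2 * (n / 2) = r - 1 by omega,
      ZMod.pow_card_sub_one_eq_one hy0]
  have := Nat.le_of_dvd (by omega) (ho ▸ orderOf_dvd_of_pow_eq_one hpow)
  omega

theorem square_of_odd_order {n r : ℕ} (hn : 1 < n) (hr : r.Prime)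
    (ho : orderOf (2 : ZMod r) = n) (hodd : n % 2 = 1) : r % 8 = 1 ∨ r % 8 = 7 := by
  have := Fact.mk hr
  have hro := (order_facts hn hr ho).1
  rw [← ZMod.exists_sq_eq_two_iff (by rintro rfl; omega)]
  refine ⟨2 ^ ((n + 1) / 2), ?_⟩
  rw [← pow_add, show (n + 1) / 2 + (n + 1) / 2 = n + 1 by omega, pow_succ, ← ho,
    pow_orderOf_eq_one, one_mul]

theorem large_of_order {n r : ℕ} (hn : 1 < n) (hr : r.Prime)
    (ho : orderOf (2 : ZMod r) = n) (hrn : r ≠ n + 1) : r ∣ 2 ^ n - 1 ∧ 2 * n + 1 ≤ r := by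
  obtain ⟨-, hd, k, hk, rfl⟩ := order_facts hn hr ho
  refine ⟨hd, ?_⟩
  have : k ≠ 1 := by rintro rfl; simp at hrn
  have : 2 ≤ k := by omega
  nlinarith

end

/-- Schinzel's bound: for every integer `n ≥ 13`, there is a prime `p` with
`p ∣ 2^n − 1` and `p ≥ 2n + 1`. -/
theorem stmt_13 (n : ℕ) (hn : 13 ≤ n) :
    ∃ p : ℕ, p.Prime ∧ p ∣ 2 ^ n - 1 ∧ 2 * n + 1 ≤ p := by
  have h8 : ∀ N, 11 ≤ N → N ≠ 12 → N ≠ 14 → N ≠ 18 → 8 ≤ N.totient := by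
    intro N h11 h12 h14 h18
    by_cases h : 18 < N
    · exact totient_ge N h
    · have : N ≤ 18 := by omega
      interval_cases N <;> first | contradiction | decide +kernel
  -- Here the totient of `n`, `n / 2` or `n / 4` is too small for the general argument.
  by_cases h14 : n = 14
  · exact ⟨127, by norm_num, by subst h14; norm_num, by omega⟩
  by_cases h18 : n = 18
  · exact ⟨73, by norm_num, by subst h18; norm_num, by omega⟩
  by_cases h20 : n = 20
  · exact ⟨41, by norm_num, by subst h20; norm_num, by omega⟩
  by_cases h28 : n = 28
  · exact ⟨113, by norm_num, by subst h28; norm_num, by omega⟩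
  by_cases h36 : n = 36
  · exact ⟨109, by norm_num, by subst h36; norm_num, by omega⟩
  have hcases : n % 8 = 2 ∨ n % 8 = 4 ∨ (n % 8 ≠ 2 ∧ n % 8 ≠ 4) := by omega
  rcases hcases with h2 | h4 | ⟨h2, h4⟩
  -- `n = 2m`, `m` odd: order `m` forces `r ≡ ±1 (mod 8)`, which excludes `r = 2m + 1 ≡ 3 (mod 8)`.
  · obtain ⟨m, rfl⟩ : ∃ m, n = 2 * m := ⟨n / 2, by omega⟩
    obtain ⟨r, hr, ho⟩ := exists_order_of_totient
      (h8 m (by omega) (by omega) (by omega) (by omega))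
    obtain ⟨hodd, hd, k, hk, hrk⟩ := order_facts (by omega) hr ho
    have hsq := square_of_odd_order (by omega) hr ho (by omega)
    refine ⟨r, hr, hd.trans (Nat.pow_sub_one_dvd_pow_sub_one 2 (dvd_mul_left m 2)), ?_⟩
    have hm2 : m % 2 = 1 := by omega
    have hk2 : k % 2 = 0 := by
      by_contra h
      have : (m * k) % 2 = 1 := by rw [Nat.mul_mod, hm2, show k % 2 = 1 by omega]
      omega
    have hkne : k ≠ 2 := by rintro rfl; omega
    have : 4 ≤ k := by omega
    nlinarith
  -- `n = 4m`, `m` odd: two distinct primes of order `n`, at most one of which is `n + 1`.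
  · obtain ⟨m, rfl⟩ : ∃ m, n = 4 * m := ⟨n / 4, by omega⟩
    have hm : Odd m := Nat.odd_iff.2 (by omega)
    have hφ := h8 m (by omega) (by omega) (by omega) (by omega)
    obtain ⟨A, B, hAB, hcop, hA, hB⟩ := aurifeuille hm hφ
    have h256 := Nat.pow_le_pow_right (n := 2) (by norm_num) hφ
    have hq : ∀ q : ℕ, q.Prime → q ∣ 4 * m → 30 * q < 2 ^ m.totient := by
      intro q hq hqd
      rcases (hq.dvd_mul).1 hqd with h | h
      · have := Nat.le_of_dvd (by norm_num) h
        omega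
      · exact totient_prime m q hφ hq h
    obtain ⟨r, hr, hrA, ho⟩ := exists_order (n := 4 * m) (D := A) (by omega)
      (hAB ▸ dvd_mul_right _ _) (by omega) (fun q h h' => by have := hq q h h'; omega)
    obtain ⟨s, hs, hsB, ho'⟩ := exists_order (n := 4 * m) (D := B) (by omega)
      (hAB ▸ dvd_mul_left _ _) (by omega) (fun q h h' => by have := hq q h h'; omega)
    by_cases hrn : r = 4 * m + 1
    · refine ⟨s, hs, large_of_order (by omega) hs ho' ?_⟩
      rintro hsn
      rw [hrn, ← hsn] at hrA
      exact hs.one_lt.ne' (Nat.eq_one_of_dvd_coprimes hcop hrA hsB)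
    · exact ⟨r, hr, large_of_order (by omega) hr ho hrn⟩
  -- A prime `r = n + 1` is impossible for `n` odd, and is `±1 (mod 8)` for `n ≡ 0, 6 (mod 8)`.
  · obtain ⟨r, hr, ho⟩ := exists_order_of_totient
      (h8 n (by omega) (by omega) (by omega) (by omega))
    refine ⟨r, hr, large_of_order (by omega) hr ho fun hrn => ?_⟩
    have hodd := (order_facts (by omega) hr ho).1
    exact not_square_of_order (by omega) hr ho hrn (by omega)
end
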